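/- arXiv:2101.09246 — 7 statements merged into one kernel-verified Lean document; each statement's English description precedes it below -/
import Mathlib

section
/- Let 0 < a ≤ b be real numbers and let g : [0,b) → ℝ be a bounded concave function such that g(x) = x for all x ∈ [0,a). Then 3a·∫_0^b (2x − g(x))·g(x) dx ≤ 4·(∫_0^b g(x) dx)². -/
open MeasureTheory intervalIntegral

/-!
On `[0, a]` the function `g` is the identity, so only `g` on `[a, b]` matters. There it is compared
with the affine function `ℓ x = a + m (x - a)` having the same integral over `[a, b]`; the bound
`g x ≤ x` gives `m ≤ 1`. Writing `D = ℓ - g`,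
`(2x - g) g = (2x - ℓ) ℓ - 2 (1 - m) (x - a) D - D²`.
By concavity and `g a = a`, the function `D` changes sign at most once on `(a, b)`, from negative
to positive, and it has mean zero; hence `∫ (x - a) D ≥ 0` (`integral_mul_nonneg_of_crossing`), and
replacing `g` by `ℓ` can only increase the left-hand side. For `ℓ` the difference of the two sides
is `(b - a) b (ℓ b)² ≥ 0`.
-/

/-- A mean-zero function which, once nonnegative, stays nonnegative has nonnegative first moment. -/
lemma integral_mul_nonneg_of_crossing {a b : ℝ} (hab : a ≤ b) {D : ℝ → ℝ}
    (hD : IntervalIntegrable D volume a b)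
    (hcross : ∀ x y, a < x → x < y → y < b → 0 ≤ D x → 0 ≤ D y)
    (h0 : ∫ x in a..b, D x = 0) : 0 ≤ ∫ x in a..b, (x - a) * D x := by
  -- `k` is the crossing point; the point `a` is added to keep the set nonempty.
  set S : Set ℝ := insert a {x | x ∈ Set.Ioo a b ∧ D x < 0} with hS
  have hSb : BddAbove S := by
    refine ⟨b, ?_⟩
    rintro x (rfl | hx)
    · exact hab
    · exact hx.1.2.le
  have hSne : S.Nonempty := ⟨a, Set.mem_insert _ _⟩
  set k := sSup S with hk
  have hi : IntervalIntegrable (fun x => (x - k) * D x) volume a b :=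
    hD.continuousOn_mul (by fun_prop)
  have hpos : 0 ≤ ∫ x in a..b, (x - k) * D x := by
    rw [integral_of_le hab, integral_Ioc_eq_integral_Ioo]
    refine setIntegral_nonneg measurableSet_Ioo fun x hx => ?_
    rcases lt_or_ge x k with hxk | hxk
    · obtain ⟨y, hy, hxy⟩ := exists_lt_of_lt_csSup hSne hxk
      rcases hy with rfl | hy
      · exact absurd hx.1 (not_lt.2 hxy.le)
      · refine mul_nonneg_of_nonpos_of_nonpos (by linarith) ?_
        by_contra hc
        exact absurd (hcross x y hx.1 hxy hy.1.2 (not_le.1 hc).le) (not_le.2 hy.2)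
    · rcases hxk.eq_or_lt with h | h
      · simp [h]
      · refine mul_nonneg (by linarith) ?_
        by_contra hc
        exact absurd (le_csSup hSb (Or.inr ⟨hx, not_le.1 hc⟩ : x ∈ S)) (not_le.2 h)
  have : ∫ x in a..b, (x - a) * D x = ∫ x in a..b, ((x - k) * D x + (k - a) * D x) := by
    congr 1; ext x; ring
  rw [this, integral_add hi (hD.const_mul _), intervalIntegral.integral_const_mul, h0]
  linarith

/-- Lemma 3.3 (inequality part): for `0 < a ≤ b` and a bounded concave function
`g` on `[0, b)` with `g x = x` on `[0, a)`, we have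
`3a·∫_0^b (2x − g x)·g x dx ≤ 4·(∫_0^b g x dx)²`. -/
theorem stmt_0 (a b : ℝ) (ha : 0 < a) (hab : a ≤ b) (g : ℝ → ℝ)
    (hconc : ConcaveOn ℝ (Set.Ico 0 b) g)
    (hbdd : ∃ M : ℝ, ∀ x ∈ Set.Ico (0 : ℝ) b, |g x| ≤ M)
    (hga : ∀ x ∈ Set.Ico (0 : ℝ) a, g x = x) :
    3 * a * ∫ x in (0 : ℝ)..b, (2 * x - g x) * g x ≤
      4 * (∫ x in (0 : ℝ)..b, g x) ^ 2 := by
  obtain ⟨M, hM⟩ := hbdd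
  have hb : 0 < b := ha.trans_le hab
  have hcont : ContinuousOn g (Set.Ioo 0 b) := by
    have := hconc.continuousOn_interior
    rwa [interior_Ico] at this
  have hgi : IntervalIntegrable g volume 0 b := by
    rw [intervalIntegrable_iff_integrableOn_Ioo_of_le hb.le]
    refine IntegrableOn.of_bound (by simp) (hcont.aestronglyMeasurable measurableSet_Ioo) M ?_
    filter_upwards [ae_restrict_mem measurableSet_Ioo] with x hx
    exact hM x ⟨hx.1.le, hx.2⟩
  have hg2 : IntervalIntegrable (fun x => g x * g x) volume 0 b := by
    rw [intervalIntegrable_iff_integrableOn_Ioo_of_le hb.le]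
    refine IntegrableOn.of_bound (by simp)
      ((hcont.mul hcont).aestronglyMeasurable measurableSet_Ioo) (M * M) ?_
    filter_upwards [ae_restrict_mem measurableSet_Ioo] with x hx
    have h := hM x ⟨hx.1.le, hx.2⟩
    rw [norm_mul]
    exact mul_le_mul h h (abs_nonneg _) ((abs_nonneg _).trans h)
  have hJi : IntervalIntegrable (fun x => (2 * x - g x) * g x) volume 0 b := by
    have h1 : IntervalIntegrable (fun x => (2 * x) * g x) volume 0 b :=
      hgi.continuousOn_mul (by fun_prop)
    refine (h1.sub hg2).congr fun x _ => ?_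
    ring
  have hsub1 : Set.uIcc 0 a ⊆ Set.uIcc 0 b := by
    rw [Set.uIcc_of_le ha.le, Set.uIcc_of_le hb.le]; exact Set.Icc_subset_Icc_right hab
  have hsub2 : Set.uIcc a b ⊆ Set.uIcc 0 b := by
    rw [Set.uIcc_of_le hab, Set.uIcc_of_le hb.le]; exact Set.Icc_subset_Icc_left ha.le
  have hI0 : ∫ x in (0 : ℝ)..a, g x = a ^ 2 / 2 := by
    have : ∫ x in (0 : ℝ)..a, g x = ∫ x in (0 : ℝ)..a, x := by
      rw [integral_of_le ha.le, integral_of_le ha.le, integral_Ioc_eq_integral_Ioo,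
        integral_Ioc_eq_integral_Ioo]
      exact setIntegral_congr_fun measurableSet_Ioo fun x hx => hga x ⟨hx.1.le, hx.2⟩
    rw [this, integral_id]; ring
  have hJ0 : ∫ x in (0 : ℝ)..a, (2 * x - g x) * g x = a ^ 3 / 3 := by
    have : ∫ x in (0 : ℝ)..a, (2 * x - g x) * g x = ∫ x in (0 : ℝ)..a, x ^ 2 := by
      rw [integral_of_le ha.le, integral_of_le ha.le, integral_Ioc_eq_integral_Ioo,
        integral_Ioc_eq_integral_Ioo]
      refine setIntegral_congr_fun measurableSet_Ioo fun x hx => ?_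
      simp only [hga x ⟨hx.1.le, hx.2⟩]; ring
    rw [this, integral_pow]; norm_num
  rw [← integral_add_adjacent_intervals (hJi.mono_set hsub1) (hJi.mono_set hsub2),
    ← integral_add_adjacent_intervals (hgi.mono_set hsub1) (hgi.mono_set hsub2), hI0, hJ0]
  rcases hab.eq_or_lt with rfl | hlt
  · simp only [integral_same]
    exact le_of_eq (by ring)
  have hgi' := hgi.mono_set hsub2
  have hg2' := hg2.mono_set hsub2
  have hgaa : g a = a := by
    have h1 : Filter.Tendsto g (nhdsWithin a (Set.Iio a)) (nhds (g a)) :=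
      ((hcont.continuousAt (Ioo_mem_nhds ha hlt)).tendsto).mono_left nhdsWithin_le_nhds
    have h2 : Filter.Tendsto g (nhdsWithin a (Set.Iio a)) (nhds a) := by
      refine Filter.Tendsto.congr' ?_ (Filter.tendsto_id.mono_left nhdsWithin_le_nhds)
      filter_upwards [Ioo_mem_nhdsLT ha] with x hx
      exact (hga x ⟨hx.1.le, hx.2⟩).symm
    exact tendsto_nhds_unique h1 h2
  have hgle : ∀ x ∈ Set.Ioo a b, g x ≤ x := by
    -- Concavity at the point `a / 2` between `0` and `x`.
    intro x hx
    have hx0 : 0 < x := ha.trans hx.1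
    have ht : a / 2 / x ≤ 1 := by
      rw [div_le_one hx0]; linarith [hx.1]
    have h := hconc.2 (⟨le_rfl, hb⟩ : (0 : ℝ) ∈ Set.Ico 0 b) (⟨hx0.le, hx.2⟩ : x ∈ Set.Ico 0 b)
      (sub_nonneg.2 ht) (by positivity : 0 ≤ a / 2 / x) (by ring)
    have e : a / 2 / x * x = a / 2 := by field_simp
    simp only [smul_eq_mul, mul_zero, zero_add, e, hga 0 ⟨le_rfl, ha⟩,
      hga (a / 2) ⟨by linarith, by linarith⟩] at h
    have h' : a / 2 / x * g x ≤ a / 2 / x * x := by linarith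
    exact le_of_mul_le_mul_left h' (by positivity)
  set G := ∫ x in a..b, g x with hG
  obtain ⟨h, hh⟩ : ∃ h, h = b - a := ⟨_, rfl⟩
  have hhpos : 0 < h := by linarith
  have hbh : b = a + h := by linarith
  have hGle : G ≤ a * h + h ^ 2 / 2 := by
    have h1 : G ≤ ∫ x in a..b, x := by
      refine integral_mono_on_of_le_Ioo hab hgi' (continuous_id.intervalIntegrable _ _) hgle
    rw [integral_id] at h1
    rw [hbh] at h1
    linarith
  obtain ⟨m, hm⟩ : ∃ m, m = (G - a * h) * 2 / h ^ 2 := ⟨_, rfl⟩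
  have hGm : G = a * h + m * h ^ 2 / 2 := by rw [hm]; field_simp; ring
  have hm1 : m ≤ 1 := by
    rw [hm, div_le_one (by positivity)]; linarith
  set D : ℝ → ℝ := fun x => (a + m * (x - a)) - g x with hDdef
  have hDi : IntervalIntegrable D volume a b :=
    IntervalIntegrable.sub (Continuous.intervalIntegrable (by fun_prop) _ _) hgi'
  have hpoly1 : ∫ x in a..b, (a + m * (x - a)) = a * h + m * h ^ 2 / 2 := by
    have := integral_comp_sub_right (a := a) (b := b) (fun y => a + m * y) a
    rw [this, integral_add (by simp) (Continuous.intervalIntegrable (by fun_prop) _ _),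
      intervalIntegral.integral_const_mul, integral_id, intervalIntegral.integral_const, ← hh]
    simp; ring
  have hpoly2 : ∫ x in a..b, (2 * x - (a + m * (x - a))) * (a + m * (x - a)) =
      a ^ 2 * h + a * h ^ 2 + (2 * m - m ^ 2) * h ^ 3 / 3 := by
    have := integral_comp_sub_right (a := a) (b := b)
      (fun y => a ^ 2 + ((2 * a) * y + (2 * m - m ^ 2) * y ^ 2)) a
    have e : ∀ x, (2 * x - (a + m * (x - a))) * (a + m * (x - a)) =
      a ^ 2 + ((2 * a) * (x - a) + (2 * m - m ^ 2) * (x - a) ^ 2) := fun x => by ring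
    simp only [e]
    rw [this, integral_add (by simp) (Continuous.intervalIntegrable (by fun_prop) _ _),
      integral_add (Continuous.intervalIntegrable (by fun_prop) _ _)
        (Continuous.intervalIntegrable (by fun_prop) _ _),
      intervalIntegral.integral_const_mul, intervalIntegral.integral_const_mul,
      integral_id, integral_pow, intervalIntegral.integral_const, ← hh]
    simp; ring
  have hD0 : ∫ x in a..b, D x = 0 := by
    rw [hDdef, integral_sub (Continuous.intervalIntegrable (by fun_prop) _ _) hgi', hpoly1, ← hG,
      hGm]
    ring
  have hD1 : 0 ≤ ∫ x in a..b, (x - a) * D x := by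
    refine integral_mul_nonneg_of_crossing hab hDi ?_ hD0
    intro x y hx hxy hy hDx
    have hya : 0 < y - a := by linarith
    have hc := hconc.2 (⟨ha.le, hlt⟩ : a ∈ Set.Ico 0 b)
      (⟨by linarith, hy⟩ : y ∈ Set.Ico 0 b)
      (div_nonneg (by linarith) hya.le : 0 ≤ (y - x) / (y - a))
      (div_nonneg (by linarith) hya.le : 0 ≤ (x - a) / (y - a)) (by field_simp; ring)
    have e : (y - x) / (y - a) * a + (x - a) / (y - a) * y = x := by field_simp; ring
    simp only [smul_eq_mul, e, hgaa] at hc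
    have key : D x ≤ (x - a) / (y - a) * D y := by
      have e2 : (x - a) / (y - a) * (a + m * (y - a)) =
        a + m * (x - a) - (y - x) / (y - a) * a := by field_simp; ring
      simp only [hDdef]
      rw [mul_sub ((x - a) / (y - a)), e2]
      linarith
    exact nonneg_of_mul_nonneg_right (hDx.trans key) (div_pos (by linarith) hya)
  have hD2 : 0 ≤ ∫ x in a..b, D x * D x :=
    integral_nonneg hab fun x _ => mul_self_nonneg _
  have hD1i : IntervalIntegrable (fun x => (x - a) * D x) volume a b :=
    hDi.continuousOn_mul (by fun_prop)
  have hD2i : IntervalIntegrable (fun x => D x * D x) volume a b := by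
    have h1 : IntervalIntegrable (fun x => (a + m * (x - a)) * (a + m * (x - a))) volume a b :=
      Continuous.intervalIntegrable (by fun_prop) _ _
    have h2 : IntervalIntegrable (fun x => (2 * (a + m * (x - a))) * g x) volume a b :=
      hgi'.continuousOn_mul (by fun_prop)
    refine ((h1.sub h2).add hg2').congr fun x _ => ?_
    simp only [hDdef]; ring
  have hJ : ∫ x in a..b, (2 * x - g x) * g x =
      a ^ 2 * h + a * h ^ 2 + (2 * m - m ^ 2) * h ^ 3 / 3
        - 2 * (1 - m) * (∫ x in a..b, (x - a) * D x) - ∫ x in a..b, D x * D x := by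
    rw [← hpoly2, ← intervalIntegral.integral_const_mul, ← integral_sub
      (Continuous.intervalIntegrable (by fun_prop) _ _) (hD1i.const_mul _), ← integral_sub
      ((Continuous.intervalIntegrable (by fun_prop) _ _).sub (hD1i.const_mul _)) hD2i]
    congr 1; ext x; simp only [hDdef]; ring
  have hJle : ∫ x in a..b, (2 * x - g x) * g x ≤
      a ^ 2 * h + a * h ^ 2 + (2 * m - m ^ 2) * h ^ 3 / 3 := by
    rw [hJ]
    linarith [mul_nonneg (mul_nonneg zero_le_two (sub_nonneg.2 hm1)) hD1]
  calc 3 * a * (a ^ 3 / 3 + ∫ x in a..b, (2 * x - g x) * g x)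
      ≤ 3 * a * (a ^ 3 / 3 + (a ^ 2 * h + a * h ^ 2 + (2 * m - m ^ 2) * h ^ 3 / 3)) := by gcongr
    _ ≤ 4 * (a ^ 2 / 2 + G) ^ 2 := by
      rw [hGm]
      have : 0 ≤ h * (a + h) * (a + m * h) ^ 2 := by positivity
      linarith
end

section
/- Let 0 < a ≤ b be real numbers and let g : [0,b) → ℝ be a bounded concave function such that g(x) = x for all x ∈ [0,a). Define h : [0,b) → ℝ by h(x) = x for 0 ≤ x ≤ a and, when a < b, h(x) = a(b−x)/(b−a) for a < x < b. Then 3a·∫_0^b (2x − g(x))·g(x) dx = 4·(∫_0^b g(x) dx)² holds if and only if a = b, or g(x) = h(x) for all x ∈ [0,b). -/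
open MeasureTheory intervalIntegral

/-!
The defect `F(g) = 4 (∫ g)² - 3a ∫ (2x - g) g` is a strictly convex quadratic functional of `g`, so
it is expanded around the extremal function `h`. Only the case `a < b` needs an argument. There
`g a = a` by continuity of `g` in the interior, so `k = g - h` vanishes on `[0, a]` and is concave
on `[a, b)`, since `h` is affine there. As `F(h) = 0`, the expansion (`defect_identity`) reads
`F(g) = 4 (∫ k)² + 3a ∫ k² + 2ab ∫ k w`, with all integrals over `[a, b]` and weight
`w(x) = 2 - 3 (x - a) / (b - a)`.

The first-order term is nonnegative (`weighted_nonneg`): `w` is orthogonal to `x - a` on `[a, b]`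
and changes sign from `+` to `-` at `m = a + 2 (b - a) / 3`, while the concave function `k`,
vanishing at `a`, lies above its chord over `[a, m]` to the left of `m` and below the extended chord
to the right. Hence `F(g) = 0` forces `∫ k² = 0`, and `k = 0` on `[a, b)` by continuity.
-/

lemma intervalIntegrable_of_bdd_Ioo {a b M : ℝ} (hab : a ≤ b) {f : ℝ → ℝ}
    (hc : ContinuousOn f (Set.Ioo a b)) (hM : ∀ x ∈ Set.Ioo a b, |f x| ≤ M) :
    IntervalIntegrable f volume a b := by
  rw [intervalIntegrable_iff_integrableOn_Ioo_of_le hab]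
  refine IntegrableOn.of_bound (by simp) (hc.aestronglyMeasurable measurableSet_Ioo) M ?_
  filter_upwards [ae_restrict_mem measurableSet_Ioo] with x hx
  simpa using hM x hx

lemma integral_congr_Ioo {a b : ℝ} (hab : a ≤ b) {f g : ℝ → ℝ}
    (h : ∀ x ∈ Set.Ioo a b, f x = g x) : ∫ x in a..b, f x = ∫ x in a..b, g x := by
  rw [integral_of_le hab, integral_of_le hab, integral_Ioc_eq_integral_Ioo,
    integral_Ioc_eq_integral_Ioo]
  exact setIntegral_congr_fun measurableSet_Ioo h

lemma integral_quadratic (a b A B C : ℝ) :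
    ∫ x in a..b, (A + B * x + C * x ^ 2) =
      A * (b - a) + B * (b ^ 2 - a ^ 2) / 2 + C * (b ^ 3 - a ^ 3) / 3 := by
  rw [integral_eq_sub_of_hasDerivAt (f := fun x => A * x + B * x ^ 2 / 2 + C * x ^ 3 / 3)]
  · ring
  · intro x _
    have h1 := (hasDerivAt_id x).const_mul A
    have h2 := ((hasDerivAt_pow 2 x).const_mul B).div_const 2
    have h3 := ((hasDerivAt_pow 3 x).const_mul C).div_const 3
    refine ((h1.add h2).add h3).congr_deriv ?_
    norm_num
    ring
  · exact Continuous.intervalIntegrable (by fun_prop) _ _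

/-- Nonnegativity of the first-order term: a concave function vanishing at `a` has nonnegative
integral against the weight `2 - 3 (x - a) / (b - a)`. -/
lemma weighted_nonneg {a b : ℝ} (hab : a < b) {k : ℝ → ℝ} (hk : ConcaveOn ℝ (Set.Ico a b) k)
    (hka : k a = 0) (hi : IntervalIntegrable k volume a b) :
    0 ≤ ∫ x in a..b, k x * (2 - 3 * (x - a) / (b - a)) := by
  have hd : 0 < b - a := sub_pos.2 hab
  set m := a + 2 * (b - a) / 3 with hm
  -- the slope of the chord of `k` over `[a, m]`
  set c := k m / (m - a) with hc
  have hma : 0 < m - a := by rw [hm]; linarith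
  have hmb : m < b := by rw [hm]; linarith
  have hcm : c * (m - a) = k m := by rw [hc]; field_simp
  have horth : ∫ x in a..b, c * (x - a) * (2 - 3 * (x - a) / (b - a)) = 0 := by
    have : ∀ x, c * (x - a) * (2 - 3 * (x - a) / (b - a)) =
        (-2 * c * a - 3 * c * a ^ 2 / (b - a)) + (2 * c + 6 * c * a / (b - a)) * x +
          (-3 * c / (b - a)) * x ^ 2 := by
      intro x; field_simp; ring
    simp_rw [this]
    rw [integral_quadratic]
    field_simp
    ring
  have hw : Continuous fun x => 2 - 3 * (x - a) / (b - a) := by fun_prop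
  have hsub : ∫ x in a..b, k x * (2 - 3 * (x - a) / (b - a)) =
      ∫ x in a..b, (k x - c * (x - a)) * (2 - 3 * (x - a) / (b - a)) := by
    simp_rw [sub_mul (k _)]
    rw [integral_sub (hi.mul_continuousOn hw.continuousOn)
      (Continuous.intervalIntegrable (by fun_prop) _ _), horth, sub_zero]
  rw [hsub, integral_of_le hab.le, integral_Ioc_eq_integral_Ioo]
  refine setIntegral_nonneg measurableSet_Ioo fun x hx => ?_
  have hxa : 0 < x - a := sub_pos.2 hx.1
  have haI : a ∈ Set.Ico a b := ⟨le_rfl, hab⟩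
  have hw' : 2 - 3 * (x - a) / (b - a) = 3 * (m - x) / (b - a) := by
    rw [hm]; field_simp; ring
  rw [hw']
  rcases le_total x m with hxm | hxm
  · have h := hk.2 (⟨by linarith, hmb⟩ : m ∈ Set.Ico a b) haI
      (by positivity : 0 ≤ (x - a) / (m - a))
      (div_nonneg (by linarith) hma.le : 0 ≤ (m - x) / (m - a)) (by field_simp; ring)
    have e : ((x - a) / (m - a)) • m + ((m - x) / (m - a)) • a = x := by
      simp only [smul_eq_mul]; field_simp; ring
    rw [e, hka, smul_zero, add_zero, smul_eq_mul] at h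
    have e2 : (x - a) / (m - a) * k m = c * (x - a) := by rw [hc]; ring
    exact mul_nonneg (by linarith) (div_nonneg (by linarith) hd.le)
  · have h := hk.2 (⟨hx.1.le, hx.2⟩ : x ∈ Set.Ico a b) haI
      (by positivity : 0 ≤ (m - a) / (x - a))
      (div_nonneg (by linarith) hxa.le : 0 ≤ (x - m) / (x - a)) (by field_simp; ring)
    have e : ((m - a) / (x - a)) • x + ((x - m) / (x - a)) • a = m := by
      simp only [smul_eq_mul]; field_simp; ring
    rw [e, hka, smul_zero, add_zero, smul_eq_mul, ← hcm, div_mul_eq_mul_div,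
      div_le_iff₀ hxa] at h
    have h2 : k x ≤ c * (x - a) := by
      refine le_of_mul_le_mul_left ?_ hma
      linarith
    exact mul_nonneg_of_nonpos_of_nonpos (by linarith)
      (div_nonpos_of_nonpos_of_nonneg (by linarith) hd.le)

/-- Exact second-order expansion of the defect around the extremal function; `k` is the deviation of
`g` from the affine function `a (b - x) / (b - a)` on `(a, b)`. -/
lemma defect_identity {a b : ℝ} (ha : 0 < a) (hab : a < b) {g k : ℝ → ℝ}
    (hga : ∀ x ∈ Set.Ioo (0 : ℝ) a, g x = x)
    (hk : ∀ x ∈ Set.Ioo a b, g x = a * (b - x) / (b - a) + k x)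
    (hg : IntervalIntegrable g volume 0 b)
    (hgg : IntervalIntegrable (fun x => (2 * x - g x) * g x) volume 0 b)
    (hki : IntervalIntegrable k volume a b)
    (hkk : IntervalIntegrable (fun x => k x ^ 2) volume a b) :
    4 * (∫ x in (0 : ℝ)..b, g x) ^ 2 - 3 * a * ∫ x in (0 : ℝ)..b, (2 * x - g x) * g x =
      4 * (∫ x in a..b, k x) ^ 2 + 3 * a * (∫ x in a..b, k x ^ 2) +
        2 * a * b * ∫ x in a..b, k x * (2 - 3 * (x - a) / (b - a)) := by
  have hd : 0 < b - a := sub_pos.2 hab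
  have s1 : Set.uIcc 0 a ⊆ Set.uIcc 0 b := Set.uIcc_subset_uIcc_left (by
    rw [Set.uIcc_of_le (by linarith)]; exact ⟨ha.le, hab.le⟩)
  have s2 : Set.uIcc a b ⊆ Set.uIcc 0 b := Set.uIcc_subset_uIcc_right (by
    rw [Set.uIcc_of_le (by linarith)]; exact ⟨ha.le, hab.le⟩)
  have hw : Continuous fun x => 2 - 3 * (x - a) / (b - a) := by fun_prop
  have hkw := hki.mul_continuousOn hw.continuousOn
  have I1 : ∫ x in (0 : ℝ)..a, g x = a ^ 2 / 2 := by
    rw [integral_congr_Ioo ha.le hga, integral_id]; ring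
  have J1 : ∫ x in (0 : ℝ)..a, (2 * x - g x) * g x = a ^ 3 / 3 := by
    rw [integral_congr_Ioo ha.le (g := fun x => x ^ 2)
      (fun x hx => by rw [hga x hx]; ring), integral_pow]
    norm_num
  have I2 : ∫ x in a..b, g x = a * (b - a) / 2 + ∫ x in a..b, k x := by
    rw [integral_congr_Ioo hab.le (g := fun x => (a * b / (b - a) + (-a / (b - a)) * x + 0 * x ^ 2)
        + k x) (fun x hx => by rw [hk x hx]; ring),
      integral_add (Continuous.intervalIntegrable (by fun_prop) _ _) hki, integral_quadratic]
    field_simp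
    ring
  have J2 : ∫ x in a..b, (2 * x - g x) * g x = (a * b ^ 2 / 3 - a ^ 3 / 3) +
      4 * b / 3 * (∫ x in a..b, k x) -
      2 * b / 3 * (∫ x in a..b, k x * (2 - 3 * (x - a) / (b - a))) - ∫ x in a..b, k x ^ 2 := by
    rw [integral_congr_Ioo hab.le (g := fun x =>
        (-(a * b) ^ 2 / (b - a) ^ 2 + (2 * a * b / (b - a) + 2 * a ^ 2 * b / (b - a) ^ 2) * x
            + (-2 * a / (b - a) - a ^ 2 / (b - a) ^ 2) * x ^ 2) + 4 * b / 3 * k x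
          - 2 * b / 3 * (k x * (2 - 3 * (x - a) / (b - a))) - k x ^ 2)
        (fun x hx => by rw [hk x hx]; field_simp; ring)]
    have c1 : IntervalIntegrable (fun x : ℝ => (-(a * b) ^ 2 / (b - a) ^ 2 +
        (2 * a * b / (b - a) + 2 * a ^ 2 * b / (b - a) ^ 2) * x
            + (-2 * a / (b - a) - a ^ 2 / (b - a) ^ 2) * x ^ 2)) volume a b :=
      Continuous.intervalIntegrable (by fun_prop) _ _
    rw [integral_sub ((c1.add (hki.const_mul _)).sub (hkw.const_mul _)) hkk,
      integral_sub (c1.add (hki.const_mul _)) (hkw.const_mul _),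
      integral_add c1 (hki.const_mul _), integral_quadratic,
      intervalIntegral.integral_const_mul, intervalIntegral.integral_const_mul]
    congr 3
    field_simp
    ring
  rw [← integral_add_adjacent_intervals (hg.mono_set s1) (hg.mono_set s2),
    ← integral_add_adjacent_intervals (hgg.mono_set s1) (hgg.mono_set s2), I1, I2, J1, J2]
  ring

/-- Lemma 3.3 (equality characterization): for `0 < a ≤ b` and a bounded concave
function `g` on `[0, b)` with `g x = x` on `[0, a)`, equality
`3a·∫_0^b (2x − g x)·g x dx = 4·(∫_0^b g x dx)²` holds iff `a = b` or `g` equals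
the function `h` given by `h x = x` for `x ≤ a` and `h x = a(b−x)/(b−a)` for `a < x`. -/
theorem stmt_1 (a b : ℝ) (ha : 0 < a) (hab : a ≤ b) (g : ℝ → ℝ)
    (hconc : ConcaveOn ℝ (Set.Ico 0 b) g)
    (hbdd : ∃ M : ℝ, ∀ x ∈ Set.Ico (0 : ℝ) b, |g x| ≤ M)
    (hga : ∀ x ∈ Set.Ico (0 : ℝ) a, g x = x) :
    3 * a * ∫ x in (0 : ℝ)..b, (2 * x - g x) * g x =
        4 * (∫ x in (0 : ℝ)..b, g x) ^ 2 ↔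
      a = b ∨ ∀ x ∈ Set.Ico (0 : ℝ) b,
        g x = if x ≤ a then x else a * (b - x) / (b - a) := by
  have hga' : ∀ x ∈ Set.Ioo (0 : ℝ) a, g x = x := fun x hx => hga x ⟨hx.1.le, hx.2⟩
  rcases hab.eq_or_lt with rfl | hlt
  · refine iff_of_true ?_ (Or.inl rfl)
    rw [integral_congr_Ioo ha.le hga', integral_id, integral_congr_Ioo ha.le (g := fun x => x ^ 2)
      (fun x hx => by rw [hga' x hx]; ring), integral_pow]
    norm_num
    ring
  obtain ⟨M, hM⟩ := hbdd
  have hd : 0 < b - a := sub_pos.2 hlt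
  have hcont : ContinuousOn g (Set.Ioo 0 b) := by
    have := hconc.continuousOn_interior
    rwa [interior_Ico] at this
  have hgaa : g a = a := by
    have h1 : Filter.Tendsto g (nhdsWithin a (Set.Iio a)) (nhds (g a)) :=
      (hcont.continuousAt (Ioo_mem_nhds ha hlt)).continuousWithinAt
    have h2 : Filter.Tendsto g (nhdsWithin a (Set.Iio a)) (nhds a) := by
      have h3 : Filter.Tendsto (fun x : ℝ => x) (nhdsWithin a (Set.Iio a)) (nhds a) :=
        tendsto_nhdsWithin_of_tendsto_nhds Filter.tendsto_id
      refine h3.congr' ?_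
      filter_upwards [Ioo_mem_nhdsLT ha] with x hx
      exact (hga' x hx).symm
    exact tendsto_nhds_unique h1 h2
  set k : ℝ → ℝ := fun x => g x - a * (b - x) / (b - a) with hkdef
  have hka : k a = 0 := by
    simp only [hkdef, hgaa]; field_simp; ring
  have hsub : Set.Ioo a b ⊆ Set.Ioo 0 b := Set.Ioo_subset_Ioo_left ha.le
  have hkc : ContinuousOn k (Set.Ioo a b) :=
    (hcont.mono hsub).sub (Continuous.continuousOn (by fun_prop))
  have hkM : ∀ x ∈ Set.Ioo a b, |k x| ≤ M + a := by
    intro x hx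
    have h1 := abs_le.1 (hM x ⟨(hsub hx).1.le, hx.2⟩)
    have h2 : 0 ≤ a * (b - x) / (b - a) :=
      div_nonneg (mul_nonneg ha.le (sub_nonneg.2 hx.2.le)) hd.le
    have h3 : a * (b - x) / (b - a) ≤ a := by
      rw [div_le_iff₀ hd]
      exact mul_le_mul_of_nonneg_left (by linarith [hx.1]) ha.le
    simp only [hkdef]
    exact abs_le.2 ⟨by linarith, by linarith⟩
  have hkconc : ConcaveOn ℝ (Set.Ico a b) k := by
    refine ⟨convex_Ico a b, fun x hx y hy s t hs ht hst => ?_⟩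
    have h := hconc.2 (Set.Ico_subset_Ico_left ha.le hx) (Set.Ico_subset_Ico_left ha.le hy) hs ht hst
    simp only [hkdef, smul_eq_mul] at h ⊢
    have e : a * (b - (s * x + t * y)) / (b - a) =
        s * (a * (b - x) / (b - a)) + t * (a * (b - y) / (b - a)) := by
      obtain rfl : t = 1 - s := by linarith
      field_simp; ring
    rw [e]; linarith
  have hg : IntervalIntegrable g volume 0 b :=
    intervalIntegrable_of_bdd_Ioo (by linarith) hcont fun x hx => hM x ⟨hx.1.le, hx.2⟩
  have hgg : IntervalIntegrable (fun x => (2 * x - g x) * g x) volume 0 b := by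
    refine intervalIntegrable_of_bdd_Ioo (M := (2 * b + M) * M) (by linarith) (by fun_prop)
      fun x hx => ?_
    have h1 := hM x ⟨hx.1.le, hx.2⟩
    have h2 := abs_le.1 h1
    rw [abs_mul]
    exact mul_le_mul (abs_le.2 ⟨by linarith [hx.1, hx.2], by linarith [hx.1, hx.2]⟩) h1
      (abs_nonneg _) (by linarith [hx.1, hx.2])
  have hki := intervalIntegrable_of_bdd_Ioo hlt.le hkc hkM
  have hkk : IntervalIntegrable (fun x => k x ^ 2) volume a b := by
    refine intervalIntegrable_of_bdd_Ioo (M := (M + a) ^ 2) hlt.le (hkc.pow 2) fun x hx => ?_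
    rw [abs_pow]
    exact pow_le_pow_left₀ (abs_nonneg _) (hkM x hx) 2
  have hid := defect_identity ha hlt hga' (k := k)
    (fun x _ => by simp only [hkdef]; ring) hg hgg hki hkk
  have hW := weighted_nonneg hlt hkconc hka hki
  constructor
  · intro heq
    right
    have hQ0 : 0 ≤ ∫ x in a..b, k x ^ 2 := integral_nonneg hlt.le fun x _ => sq_nonneg _
    have hQ : ∫ x in a..b, k x ^ 2 = 0 := by
      have h1 : 0 ≤ 2 * a * b * ∫ x in a..b, k x * (2 - 3 * (x - a) / (b - a)) :=
        mul_nonneg (mul_nonneg (by linarith) (by linarith)) hW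
      have h2 : 3 * a * ∫ x in a..b, k x ^ 2 ≤ 0 := by
        linarith [sq_nonneg (∫ x in a..b, k x)]
      nlinarith
    have hae : (fun x => k x ^ 2) =ᵐ[volume.restrict (Set.Ioo a b)] fun _ => 0 := by
      rw [integral_of_le hlt.le, integral_Ioc_eq_integral_Ioo] at hQ
      exact (setIntegral_eq_zero_iff_of_nonneg_ae (Filter.Eventually.of_forall fun x => sq_nonneg _)
        ((intervalIntegrable_iff_integrableOn_Ioo_of_le hlt.le).1 hkk)).1 hQ
    have hzero := Measure.eqOn_open_of_ae_eq hae isOpen_Ioo (hkc.pow 2) continuousOn_const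
    intro x hx
    split_ifs with hxa
    · rcases hxa.eq_or_lt with rfl | h
      · exact hgaa
      · exact hga x ⟨hx.1, h⟩
    · have h0 : k x = 0 := pow_eq_zero_iff two_ne_zero |>.1 (hzero ⟨not_le.1 hxa, hx.2⟩)
      exact sub_eq_zero.1 h0
  · rintro (h | h)
    · exact absurd h hlt.ne
    have hk0 : ∀ x ∈ Set.Ioo a b, k x = 0 := by
      intro x hx
      have := h x ⟨(hsub hx).1.le, hx.2⟩
      rw [if_neg (not_le.2 hx.1)] at this
      simp only [hkdef, this, sub_self]
    rw [integral_congr_Ioo hlt.le hk0,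
      integral_congr_Ioo hlt.le (f := fun x => k x ^ 2) (g := fun _ => 0)
        (fun x hx => by rw [hk0 x hx]; norm_num),
      integral_congr_Ioo hlt.le (f := fun x => k x * (2 - 3 * (x - a) / (b - a))) (g := fun _ => 0)
        (fun x hx => by rw [hk0 x hx]; ring)] at hid
    simp only [intervalIntegral.integral_zero] at hid
    linarith
end

section
/- Let 0 < a ≤ b be real numbers and let g : [0,b) → ℝ be a bounded concave function such that g(x) = x for all x ∈ [0,a). If 3a·∫_0^b (2x − g(x))·g(x) dx = 4·(∫_0^b g(x) dx)², then ∫_0^b g(x) dx = ab/2. -/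
open MeasureTheory intervalIntegral

/-!
Put `h x = x - g x`. It is convex and nonnegative, vanishes on `[0, a]`, and
`(2 * x - g x) * g x = x ^ 2 - h x ^ 2`. With `L = b - a`, `P = ∫ h` and `Q = ∫ h ^ 2` over `[a, b]`,
the equality hypothesis reads `a * b ^ 3 - 3 * a * Q = (b ^ 2 - 2 * P) ^ 2`.

Among nonnegative convex functions on `[a, b)` vanishing at `a` and having a given integral, the linear one
minimises the integral of the square, so `4 * P ^ 2 ≤ 3 * L * Q`
(`four_mul_sq_integral_le`). Substituting this bound gives `(2 * P - b * L) ^ 2 ≤ 0`, whence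
`P = b * L / 2`, which is the claim.
-/

/-- A convex function vanishing at `a` has increasing slope `h x / (x - a)`, so its barycentre
lies to the right of that of the linear function `x - a`, which is `c = a + 2 * (b - a) / 3`. -/
lemma barycentre_le {a b : ℝ} (hab : a < b) {h : ℝ → ℝ} (hconv : ConvexOn ℝ (Set.Ico a b) h)
    (h0 : h a = 0) (hint : IntervalIntegrable h volume a b) :
    2 * (b - a) / 3 * ∫ x in a..b, h x ≤ ∫ x in a..b, h x * (x - a) := by
  set d := 2 * (b - a) / 3 with hd
  have hdpos : 0 < d := by rw [hd]; linarith
  have hw : IntervalIntegrable (fun x => h x * (x - a)) volume a b :=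
    hint.mul_continuousOn (by fun_prop)
  have hcmem : a + d ∈ Set.Ico a b := ⟨by linarith, by rw [hd]; linarith⟩
  have hamem : a ∈ Set.Ico a b := ⟨le_rfl, hab⟩
  -- The slope `h x / (x - a)` is nondecreasing, with denominators cleared.
  have slope : ∀ x y : ℝ, a ≤ x → x ≤ y → y < b → a < y → h x * (y - a) ≤ h y * (x - a) := by
    intro x y hax hxy hyb hay
    have hy : 0 < y - a := by linarith
    have key := hconv.2 hamem (⟨hay.le, hyb⟩ : y ∈ Set.Ico a b)
      (show 0 ≤ (y - x) / (y - a) from div_nonneg (by linarith) hy.le)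
      (show 0 ≤ (x - a) / (y - a) from div_nonneg (by linarith) hy.le)
      (by field_simp; ring)
    have hx : ((y - x) / (y - a)) • a + ((x - a) / (y - a)) • y = x := by
      simp only [smul_eq_mul]; field_simp; ring
    rw [hx, h0] at key
    simp only [smul_eq_mul, mul_zero, zero_add] at key
    calc h x * (y - a) ≤ (x - a) / (y - a) * h y * (y - a) := by gcongr
      _ = h y * (x - a) := by field_simp
  have hpt : ∀ x ∈ Set.Ioo a b,
      h (a + d) / d * ((x - a) * (x - a - d)) ≤ h x * (x - a) - d * h x := by
    intro x hx
    have e : h x * (x - a) - d * h x - h (a + d) / d * ((x - a) * (x - a - d))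
        = (h x * d - h (a + d) * (x - a)) * (x - a - d) / d := by
      field_simp
    suffices 0 ≤ (h x * d - h (a + d) * (x - a)) * (x - a - d) / d by linarith
    apply div_nonneg _ hdpos.le
    rcases le_total x (a + d) with hxc | hxc
    · have := slope x (a + d) hx.1.le hxc hcmem.2 (by linarith)
      rw [add_sub_cancel_left] at this
      exact mul_nonneg_of_nonpos_of_nonpos (by linarith) (by linarith)
    · have := slope (a + d) x hcmem.1 hxc hx.2 hx.1
      rw [add_sub_cancel_left] at this
      exact mul_nonneg (by linarith) (by linarith)
  have hmono := integral_mono_on_of_le_Ioo hab.le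
    (Continuous.intervalIntegrable (by fun_prop) _ _) (hw.sub (hint.const_mul d)) hpt
  rw [integral_sub hw (hint.const_mul d), intervalIntegral.integral_const_mul,
    intervalIntegral.integral_const_mul] at hmono
  have hz : ∫ x in a..b, (x - a) * (x - a - d) = 0 := by
    rw [intervalIntegral.integral_comp_sub_right (fun u => u * (u - d)) a]
    have : (fun u : ℝ => u * (u - d)) = fun u => u ^ 2 - d * u := by ext; ring
    rw [this, intervalIntegral.integral_sub (Continuous.intervalIntegrable (by fun_prop) _ _)
      (Continuous.intervalIntegrable (by fun_prop) _ _), intervalIntegral.integral_const_mul,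
      integral_pow, integral_id, hd]
    push_cast
    ring
  rw [hz, mul_zero] at hmono
  linarith

/-- Lower bound for `∫ h ^ 2` in terms of `∫ h`, attained by `h x = k * (x - a)` with `0 ≤ k`. It
follows from `0 ≤ ∫ (h x - k * (x - a)) ^ 2`, with `k` chosen so that the two integrals agree, and
`barycentre_le` for the cross term. -/
lemma four_mul_sq_integral_le {a b : ℝ} (hab : a < b) {h : ℝ → ℝ}
    (hconv : ConvexOn ℝ (Set.Ico a b) h) (h0 : h a = 0) (hnn : ∀ x ∈ Set.Ioo a b, 0 ≤ h x)
    (hint : IntervalIntegrable h volume a b)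
    (hint2 : IntervalIntegrable (fun x => h x ^ 2) volume a b) :
    4 * (∫ x in a..b, h x) ^ 2 ≤ 3 * (b - a) * ∫ x in a..b, h x ^ 2 := by
  have hbar := barycentre_le hab hconv h0 hint
  have hw : IntervalIntegrable (fun x => h x * (x - a)) volume a b :=
    hint.mul_continuousOn (by fun_prop)
  set P := ∫ x in a..b, h x with hP
  set J := ∫ x in a..b, h x * (x - a)
  set Q := ∫ x in a..b, h x ^ 2
  have hPnn : 0 ≤ P := by
    have := integral_mono_on_of_le_Ioo (f := fun _ => (0 : ℝ)) hab.le (by simp) hint hnn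
    simpa using this
  have hL : 0 < b - a := by linarith
  -- `k * (x - a)` is the linear function with the same integral as `h`.
  set k := 2 * P / (b - a) ^ 2 with hk
  have hknn : 0 ≤ k := by positivity
  have hsq : ∫ x in a..b, (x - a) ^ 2 = (b - a) ^ 3 / 3 := by
    rw [intervalIntegral.integral_comp_sub_right (fun u => u ^ 2) a, integral_pow]
    push_cast
    ring
  have hi : IntervalIntegrable (fun x : ℝ => (x - a) ^ 2) volume a b :=
    Continuous.intervalIntegrable (by fun_prop) _ _
  have hnonneg : 0 ≤ ∫ x in a..b, (h x ^ 2 - 2 * k * (h x * (x - a)) + k ^ 2 * (x - a) ^ 2) := by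
    apply intervalIntegral.integral_nonneg hab.le
    intro x _
    nlinarith [sq_nonneg (h x - k * (x - a))]
  rw [integral_add (hint2.sub (hw.const_mul _)) (hi.const_mul _),
    integral_sub hint2 (hw.const_mul _), intervalIntegral.integral_const_mul,
    intervalIntegral.integral_const_mul, hsq] at hnonneg
  have h1 : 2 * k * (2 * (b - a) / 3 * P) ≤ 2 * k * J := by gcongr
  have h2 : 2 * k * (2 * (b - a) / 3 * P) - k ^ 2 * ((b - a) ^ 3 / 3)
      = 4 * P ^ 2 / (3 * (b - a)) := by
    rw [hk]; field_simp; ring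
  have h3 : 4 * P ^ 2 / (3 * (b - a)) ≤ Q := by
    change 0 ≤ Q - 2 * k * J + _ at hnonneg
    linarith
  rw [div_le_iff₀ (by positivity)] at h3
  linarith

/-- Lemma 3.3 (final assertion): in the equality case of
`3a·∫_0^b (2x − g x)·g x dx ≤ 4·(∫_0^b g x dx)²`, the integral of `g` is `ab/2`. -/
theorem stmt_2 (a b : ℝ) (ha : 0 < a) (hab : a ≤ b) (g : ℝ → ℝ)
    (hconc : ConcaveOn ℝ (Set.Ico 0 b) g)
    (hbdd : ∃ M : ℝ, ∀ x ∈ Set.Ico (0 : ℝ) b, |g x| ≤ M)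
    (hga : ∀ x ∈ Set.Ico (0 : ℝ) a, g x = x)
    (heq : 3 * a * ∫ x in (0 : ℝ)..b, (2 * x - g x) * g x =
      4 * (∫ x in (0 : ℝ)..b, g x) ^ 2) :
    ∫ x in (0 : ℝ)..b, g x = a * b / 2 := by
  have hb : 0 < b := ha.trans_le hab
  have hcont : ContinuousOn g (Set.Ioo 0 b) :=
    (hconc.subset Set.Ioo_subset_Ico_self (convex_Ioo 0 b)).continuousOn isOpen_Ioo
  obtain ⟨M, hM⟩ := hbdd
  have hgint : IntervalIntegrable g volume 0 b := by
    rw [intervalIntegrable_iff_integrableOn_Ioo_of_le hb.le]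
    refine Integrable.of_bound (hcont.aestronglyMeasurable measurableSet_Ioo) M ?_
    filter_upwards [ae_restrict_mem measurableSet_Ioo] with x hx
    exact hM x (Set.Ioo_subset_Ico_self hx)
  have hg2int : IntervalIntegrable (fun x => g x ^ 2) volume 0 b := by
    rw [intervalIntegrable_iff_integrableOn_Ioo_of_le hb.le]
    refine Integrable.of_bound ((hcont.pow 2).aestronglyMeasurable measurableSet_Ioo) (M ^ 2) ?_
    filter_upwards [ae_restrict_mem measurableSet_Ioo] with x hx
    rw [norm_pow]
    exact pow_le_pow_left₀ (norm_nonneg _) (hM x (Set.Ioo_subset_Ico_self hx)) 2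
  have hG0 : ∫ x in (0 : ℝ)..a, g x = a ^ 2 / 2 := by
    rw [integral_congr_Ioo_of_le (g := fun x => x) ha.le
      (fun x hx => hga x (Set.Ioo_subset_Ico_self hx)), integral_id]
    ring
  rcases hab.eq_or_lt with rfl | hlt
  · rw [hG0]; ring
  have hsub1 : Set.uIcc 0 a ⊆ Set.uIcc 0 b := by
    rw [Set.uIcc_of_le ha.le, Set.uIcc_of_le hb.le]; exact Set.Icc_subset_Icc_right hab
  have hsub2 : Set.uIcc a b ⊆ Set.uIcc 0 b := by
    rw [Set.uIcc_of_le hab, Set.uIcc_of_le hb.le]; exact Set.Icc_subset_Icc_left ha.le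
  have hFint : IntervalIntegrable (fun x => (2 * x - g x) * g x) volume 0 b := by
    have := (hgint.continuousOn_mul (g := fun x => 2 * x) (by fun_prop)).sub hg2int
    refine this.congr (fun x _ => ?_)
    ring
  have hF0 : ∫ x in (0 : ℝ)..a, (2 * x - g x) * g x = a ^ 3 / 3 := by
    rw [integral_congr_Ioo_of_le (g := fun x => x ^ 2) ha.le, integral_pow]
    · push_cast; ring
    · intro x hx
      simp only [hga x (Set.Ioo_subset_Ico_self hx)]
      ring
  have hgaa : g a = a := by
    have hca : ContinuousAt g a := hcont.continuousAt (Ioo_mem_nhds ha hlt)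
    have t1 : Filter.Tendsto g (nhdsWithin a (Set.Iio a)) (nhds (g a)) :=
      hca.tendsto.mono_left nhdsWithin_le_nhds
    have t2 : Filter.Tendsto g (nhdsWithin a (Set.Iio a)) (nhds a) := by
      refine Filter.Tendsto.congr' ?_ (Filter.tendsto_id.mono_left nhdsWithin_le_nhds)
      filter_upwards [Ioo_mem_nhdsLT ha] with x hx
      exact (hga x (Set.Ioo_subset_Ico_self hx)).symm
    exact tendsto_nhds_unique t1 t2
  -- `g x ≤ x`, by concavity at the point `a / 2` of the segment from `0` to `x`.
  have hle : ∀ x ∈ Set.Ioo a b, g x ≤ x := by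
    intro x hx
    have hx0 : 0 < x := ha.trans hx.1
    have ht : a / (2 * x) ≤ 1 := by
      rw [div_le_one (by positivity)]; linarith [hx.1]
    have key := hconc.2 (⟨le_rfl, hb⟩ : (0 : ℝ) ∈ Set.Ico 0 b)
      (⟨hx0.le, hx.2⟩ : x ∈ Set.Ico 0 b)
      (show 0 ≤ 1 - a / (2 * x) by linarith) (show 0 ≤ a / (2 * x) by positivity) (by ring)
    have e : (1 - a / (2 * x)) • (0 : ℝ) + (a / (2 * x)) • x = a / 2 := by
      simp only [smul_eq_mul]; field_simp; ring
    rw [e, hga 0 ⟨le_rfl, ha⟩, hga (a / 2) ⟨by linarith, by linarith⟩] at key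
    simp only [smul_eq_mul, mul_zero, zero_add] at key
    have e2 : a / (2 * x) * g x = a / 2 * (g x / x) := by field_simp
    rw [e2] at key
    have : g x / x ≤ 1 := le_of_mul_le_mul_left (by linarith) (half_pos ha)
    rwa [div_le_one hx0] at this
  have hconv : ConvexOn ℝ (Set.Ico a b) (fun x => x - g x) :=
    (convexOn_id (convex_Ico a b)).sub
      (hconc.subset (Set.Ico_subset_Ico_left ha.le) (convex_Ico a b))
  have hgi := hgint.mono_set hsub2
  have hFi := hFint.mono_set hsub2
  have hid : IntervalIntegrable (fun x : ℝ => x) volume a b :=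
    Continuous.intervalIntegrable (by fun_prop) _ _
  have hsq : IntervalIntegrable (fun x : ℝ => x ^ 2) volume a b :=
    Continuous.intervalIntegrable (by fun_prop) _ _
  have hexp : (fun x => (x - g x) ^ 2) = fun x => x ^ 2 - (2 * x - g x) * g x := by
    ext x; ring
  have hmain := four_mul_sq_integral_le hlt hconv (by simp [hgaa])
    (fun x hx => sub_nonneg.2 (hle x hx)) (hid.sub hgi)
    (by rw [hexp]; exact hsq.sub hFi)
  rw [hexp, integral_sub hid hgi, integral_sub hsq hFi, integral_id, integral_pow] at hmain
  rw [← integral_add_adjacent_intervals (hgint.mono_set hsub1) hgi, hG0] at heq ⊢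
  rw [← integral_add_adjacent_intervals (hFint.mono_set hsub1) hFi, hF0] at heq
  generalize (∫ x in a..b, g x) = G at *
  generalize (∫ x in a..b, (2 * x - g x) * g x) = F at *
  push_cast at hmain
  -- The bound on `Q`, multiplied by `a`, turns the equality into a perfect square.
  have hfin : b * (2 * (a ^ 2 / 2 + G) - a * b) ^ 2 ≤ 0 := by
    nlinarith [mul_le_mul_of_nonneg_left hmain ha.le, congrArg (fun t => (b - a) * t) heq]
  have hz : (2 * (a ^ 2 / 2 + G) - a * b) ^ 2 = 0 :=
    le_antisymm (nonpos_of_mul_nonpos_right hfin hb) (sq_nonneg _)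
  have := pow_eq_zero_iff (two_ne_zero) |>.1 hz
  linarith
end

section
/- Let c > 0 be a real number and let f : [0,c) → ℝ be a bounded concave function with f(0) = 0. Then ∫_0^c (3x − 2c)·f(x) dx ≤ 0. -/
open MeasureTheory intervalIntegral

/-!
Since `f` is concave with `f 0 = 0`, the slope `f x / x` is nonincreasing on `(0, c)`. Put
`a = 2c/3`, the zero of the weight `3x - 2c`, and `k = f a / a`. The difference `f x - k x` is
then nonnegative where the weight is negative and nonpositive where it is positive, so
`(3x - 2c) f x ≤ (3x - 2c) k x` on `(0, c)`. The right-hand side integrates to `0` over `[0, c]`.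
-/

/-- The slope from the origin of a concave function vanishing there is nonincreasing,
stated without division. -/
lemma mul_le_mul_of_concaveOn_Ico {c : ℝ} {f : ℝ → ℝ} (hconc : ConcaveOn ℝ (Set.Ico 0 c) f)
    (hf0 : f 0 = 0) {x y : ℝ} (hx : 0 ≤ x) (hxy : x ≤ y) (hy : 0 < y) (hyc : y < c) :
    x * f y ≤ y * f x := by
  have hy_mem : y ∈ Set.Ico 0 c := ⟨hy.le, hyc⟩
  have h0_mem : (0 : ℝ) ∈ Set.Ico 0 c := ⟨le_rfl, hy.trans hyc⟩
  have h1 : 0 ≤ x / y := by positivity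
  have h2 : 0 ≤ 1 - x / y := sub_nonneg.2 ((div_le_one hy).2 hxy)
  have h := hconc.2 hy_mem h0_mem h1 h2 (by ring)
  simp only [smul_eq_mul, hf0, mul_zero, add_zero, div_mul_cancel₀ x hy.ne'] at h
  rw [div_mul_eq_mul_div, div_le_iff₀ hy] at h
  linarith

/-- The key claim in the proof of Lemma 3.3: for `c > 0` and a bounded concave
function `f` on `[0, c)` with `f 0 = 0`, we have `∫_0^c (3x − 2c)·f x dx ≤ 0`. -/
theorem stmt_3 (c : ℝ) (hc : 0 < c) (f : ℝ → ℝ)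
    (hconc : ConcaveOn ℝ (Set.Ico 0 c) f)
    (hbdd : ∃ M : ℝ, ∀ x ∈ Set.Ico (0 : ℝ) c, |f x| ≤ M)
    (hf0 : f 0 = 0) :
    ∫ x in (0 : ℝ)..c, (3 * x - 2 * c) * f x ≤ 0 := by
  -- The integrand is in fact integrable, but otherwise the integral is `0` by convention,
  -- so integrability need not be established.
  by_cases hf_int : IntervalIntegrable (fun x => (3 * x - 2 * c) * f x) volume 0 c
  swap
  · rw [intervalIntegral.integral_undef hf_int]
  obtain ⟨a, ha⟩ : ∃ a, a = 2 * c / 3 := ⟨_, rfl⟩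
  have ha0 : 0 < a := by rw [ha]; positivity
  have hac : a < c := by linarith
  obtain ⟨k, hk⟩ : ∃ k, k = f a / a := ⟨_, rfl⟩
  have hfa : f a = k * a := by rw [hk, div_mul_cancel₀ _ ha0.ne']
  have hg_int : IntervalIntegrable (fun x => (3 * x - 2 * c) * (k * x)) volume 0 c :=
    Continuous.intervalIntegrable (by fun_prop) _ _
  have hzero : ∫ x in (0 : ℝ)..c, (3 * x - 2 * c) * (k * x) = 0 := by
    have hd : ∀ x ∈ Set.uIcc 0 c, HasDerivAt (fun x : ℝ => k * (x ^ 3 - c * x ^ 2))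
        ((3 * x - 2 * c) * (k * x)) x := by
      intro x _
      have h := (((hasDerivAt_pow 3 x).sub ((hasDerivAt_pow 2 x).const_mul c)).const_mul k)
      exact h.congr_deriv (by norm_num; ring)
    rw [integral_eq_sub_of_hasDerivAt hd hg_int]
    ring
  refine le_trans ?_ hzero.le
  refine integral_mono_on_of_le_Ioo hc.le hf_int hg_int fun x hx => ?_
  rcases le_total x a with h | h
  · have h1 := mul_le_mul_of_concaveOn_Ico hconc hf0 hx.1.le h ha0 hac
    rw [hfa] at h1
    have h2 : k * x ≤ f x := le_of_mul_le_mul_left (by linarith) ha0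
    exact mul_le_mul_of_nonpos_left h2 (by linarith)
  · have h1 := mul_le_mul_of_concaveOn_Ico hconc hf0 ha0.le h hx.1 hx.2
    rw [hfa] at h1
    have h2 : f x ≤ k * x := le_of_mul_le_mul_left (by linarith) ha0
    exact mul_le_mul_of_nonneg_left h2 (by linarith)
end

section
/- Let c > 0 be a real number and let f : [0,c) → ℝ be a bounded concave function with f(0) = 0. Then the function F : [0,c) → ℝ defined by F(t) = ∫_0^t (3x − 2t)·f(x) dx is nonincreasing; that is, F(t) ≤ F(s) whenever 0 ≤ s ≤ t < c. -/
/-!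
Writing `F t = 3 ∫₀ᵗ x f(x) dx - 2 t ∫₀ᵗ f(x) dx`, the fundamental theorem of calculus (`f` is
continuous on the open interval `(0, c)`) gives `F'(t) = t f(t) - 2 ∫₀ᵗ f(x) dx`. Since `f` is
concave with `f 0 = 0`, it lies above its chord `x ↦ (x / t) f(t)` on `[0, t]`, so
`∫₀ᵗ f ≥ t f(t) / 2` and hence `F' ≤ 0`. The endpoint `0`, where `f` may fail to be continuous,
is handled by continuity of `F`.
-/

open MeasureTheory intervalIntegral

/-- A bounded concave function on `[0, c)` is continuous on the interior, hence integrable. -/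
lemma intervalIntegrable_of_concave {c : ℝ} {f : ℝ → ℝ}
    (hconc : ConcaveOn ℝ (Set.Ico 0 c) f)
    (hbdd : ∃ M : ℝ, ∀ x ∈ Set.Ico (0 : ℝ) c, |f x| ≤ M) {t : ℝ} (ht : 0 ≤ t) (htc : t < c) :
    IntervalIntegrable f volume 0 t := by
  obtain ⟨M, hM⟩ := hbdd
  have hcont : ContinuousOn f (Set.Ioo 0 c) := by
    simpa using hconc.continuousOn_interior
  have hint : IntegrableOn f (Set.Ioo 0 c) := by
    refine Integrable.of_bound (hcont.aestronglyMeasurable measurableSet_Ioo) M ?_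
    filter_upwards [ae_restrict_mem measurableSet_Ioo] with x hx
    exact hM x ⟨hx.1.le, hx.2⟩
  rw [intervalIntegrable_iff_integrableOn_Ioc_of_le ht]
  exact hint.mono_set fun x hx => ⟨hx.1, hx.2.trans_lt htc⟩

/-- Integrated chord inequality: the graph of `f` lies above the segment from `(0, 0)` to
`(t, f t)`, whose triangle has signed area `t * f t / 2`. -/
lemma mul_le_two_mul_integral_of_concave {c : ℝ} {f : ℝ → ℝ}
    (hconc : ConcaveOn ℝ (Set.Ico 0 c) f) (hf0 : f 0 = 0) {t : ℝ} (ht : 0 < t) (htc : t < c)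
    (hint : IntervalIntegrable f volume 0 t) :
    t * f t ≤ 2 * ∫ x in (0 : ℝ)..t, f x := by
  have hchord : ∀ x ∈ Set.Icc 0 t, x * (f t / t) ≤ f x := by
    intro x hx
    have h := hconc.2 (⟨ht.le, htc⟩ : t ∈ Set.Ico 0 c)
      (⟨le_rfl, ht.trans htc⟩ : (0 : ℝ) ∈ Set.Ico 0 c) (div_nonneg hx.1 ht.le)
      (sub_nonneg.2 ((div_le_one ht).2 hx.2)) (add_sub_cancel _ _)
    simp only [smul_eq_mul, hf0, mul_zero, add_zero, div_mul_cancel₀ x ht.ne'] at h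
    calc x * (f t / t) = x / t * f t := by ring
      _ ≤ f x := h
  have h := integral_mono_on ht.le
    (Continuous.intervalIntegrable (by fun_prop) 0 t) hint hchord
  rw [intervalIntegral.integral_mul_const, integral_id] at h
  have harea : (t ^ 2 - 0 ^ 2) / 2 * (f t / t) = t * f t / 2 := by
    field_simp
    ring
  linarith

/-- Monotonicity of `F t = ∫_0^t (3x − 2t)·f x dx` in the proof of Lemma 3.3:
for `c > 0` and a bounded concave function `f` on `[0, c)` with `f 0 = 0`,
the function `F` is nonincreasing on `[0, c)`. -/
theorem stmt_5 (c : ℝ) (hc : 0 < c) (f : ℝ → ℝ)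
    (hconc : ConcaveOn ℝ (Set.Ico 0 c) f)
    (hbdd : ∃ M : ℝ, ∀ x ∈ Set.Ico (0 : ℝ) c, |f x| ≤ M)
    (hf0 : f 0 = 0)
    (F : ℝ → ℝ) (hF : ∀ t, F t = ∫ x in (0 : ℝ)..t, (3 * x - 2 * t) * f x) :
    ∀ s t : ℝ, 0 ≤ s → s ≤ t → t < c → F t ≤ F s := by
  intro s t hs hst htc
  have ht : 0 ≤ t := hs.trans hst
  have hint : ∀ {u : ℝ}, 0 ≤ u → u < c → IntervalIntegrable f volume 0 u := fun hu huc =>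
    intervalIntegrable_of_concave hconc hbdd hu huc
  have hintx : ∀ {u : ℝ}, 0 ≤ u → u < c →
      IntervalIntegrable (fun x => x * f x) volume 0 u := fun hu huc =>
    (hint hu huc).continuousOn_mul continuousOn_id
  have hcont : ContinuousOn f (Set.Ioo 0 c) := by
    simpa using hconc.continuousOn_interior
  have hsplit : ∀ u, 0 ≤ u → u < c →
      F u = 3 * (∫ x in (0 : ℝ)..u, x * f x) - 2 * u * ∫ x in (0 : ℝ)..u, f x := by
    intro u hu huc
    rw [hF, ← intervalIntegral.integral_const_mul, ← intervalIntegral.integral_const_mul,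
      ← intervalIntegral.integral_sub ((hintx hu huc).const_mul 3)
        ((hint hu huc).const_mul (2 * u))]
    congr 1
    ext x
    ring
  have hanti : AntitoneOn
      (fun u => 3 * (∫ x in (0 : ℝ)..u, x * f x) - 2 * u * ∫ x in (0 : ℝ)..u, f x)
      (Set.Icc 0 t) := by
    have hG := continuousOn_primitive_interval' (hintx ht htc) Set.left_mem_uIcc
    have hH := continuousOn_primitive_interval' (hint ht htc) Set.left_mem_uIcc
    rw [Set.uIcc_of_le ht] at hG hH
    refine antitoneOn_of_hasDerivWithinAt_nonpos (convex_Icc 0 t)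
      (f' := fun u => u * f u - 2 * ∫ x in (0 : ℝ)..u, f x) ?_ ?_ ?_
    · exact (continuousOn_const.mul hG).sub (ContinuousOn.mul (by fun_prop) hH)
    · intro u hu
      rw [interior_Icc] at hu
      have huc : u < c := hu.2.trans htc
      have hmem : Set.Ioo 0 c ∈ nhds u := Ioo_mem_nhds hu.1 huc
      have hcontx : ContinuousOn (fun x => x * f x) (Set.Ioo 0 c) := continuousOn_id.mul hcont
      have dG := integral_hasDerivAt_right (hintx hu.1.le huc)
        (hcontx.stronglyMeasurableAtFilter isOpen_Ioo u ⟨hu.1, huc⟩) (hcontx.continuousAt hmem)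
      have dH := integral_hasDerivAt_right (hint hu.1.le huc)
        (hcont.stronglyMeasurableAtFilter isOpen_Ioo u ⟨hu.1, huc⟩) (hcont.continuousAt hmem)
      have d := (dG.const_mul 3).sub (((hasDerivAt_id u).const_mul 2).mul dH)
      refine (d.congr_deriv ?_).hasDerivWithinAt
      simp only [id]
      ring
    · intro u hu
      rw [interior_Icc] at hu
      have huc : u < c := hu.2.trans htc
      have := mul_le_two_mul_integral_of_concave hconc hf0 hu.1 huc (hint hu.1.le huc)
      linarith
  rw [hsplit t ht htc, hsplit s hs (hst.trans_lt htc)]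
  exact hanti ⟨hs, hst⟩ ⟨ht, le_rfl⟩ hst
end

section
/- Let a > 0 be a real number, let n ≥ 1 be an integer, and let g : [0,a) → ℝ be a nonnegative bounded concave function with g(0) > 0. Then g(0)^{n−1}·∫_0^a x·g(x)^{n−1} dx ≤ (n/(n+1))·(∫_0^a g(x)^{n−1} dx)². -/
open MeasureTheory intervalIntegral

/-!
Write `m = n - 1` and `I = ∫₀ᵃ g ^ m`, and compare `g` with the affine function
`h x = g 0 * (1 - x / b)`, where `b = n * I / g 0 ^ m` is chosen so that `∫₀ᵇ h ^ m = I`.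
Concavity gives `g x ≥ g 0 * (1 - x / a)`, hence `a ≤ b`. Since `g - h` is concave on `[0, a)` and
vanishes at `0`, there is a point `c ∈ [0, a]` such that `g ≥ h` before `c` and `g ≤ h` after `c`
(`exists_crossing`). So `(x - c) * (g ^ m - h ^ m) ≤ 0` on `[0, a)`, while `(x - c) * h ^ m ≥ 0` on
`[a, b]`. Integrating, and using that `g ^ m` and `h ^ m` have the same total mass, yields
`∫₀ᵃ x * g ^ m ≤ ∫₀ᵇ x * h ^ m`, and the right-hand side is `g 0 ^ m * b ^ 2 / (n * (n + 1))`.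
-/

lemma integral_one_sub_div_pow (m : ℕ) {b : ℝ} (hb : 0 < b) :
    ∫ x in (0 : ℝ)..b, (1 - x / b) ^ m = b / (m + 1) := by
  have hm : (m : ℝ) + 1 ≠ 0 := by positivity
  have key : ∀ x ∈ Set.uIcc 0 b,
      HasDerivAt (fun x : ℝ => -(b / (m + 1)) * (1 - x / b) ^ (m + 1)) ((1 - x / b) ^ m) x := by
    intro x _
    have h1 : HasDerivAt (fun x : ℝ => 1 - x / b) (-(1 / b)) x :=
      ((hasDerivAt_id x).div_const b).const_sub 1
    refine ((h1.fun_pow (m + 1)).const_mul (-(b / (m + 1)))).congr_deriv ?_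
    push_cast
    field_simp
  rw [integral_eq_sub_of_hasDerivAt key (Continuous.intervalIntegrable (by fun_prop) _ _)]
  simp [hb.ne']

lemma integral_mul_one_sub_div_pow (m : ℕ) {b : ℝ} (hb : 0 < b) :
    ∫ x in (0 : ℝ)..b, x * (1 - x / b) ^ m = b ^ 2 / ((m + 1) * (m + 2)) := by
  have e : ∀ x : ℝ, x * (1 - x / b) ^ m = b * ((1 - x / b) ^ m - (1 - x / b) ^ (m + 1)) := by
    intro x
    rw [pow_succ]
    field_simp
    ring
  simp_rw [e]
  rw [intervalIntegral.integral_const_mul,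
    intervalIntegral.integral_sub (Continuous.intervalIntegrable (by fun_prop) _ _)
    (Continuous.intervalIntegrable (by fun_prop) _ _), integral_one_sub_div_pow m hb,
    integral_one_sub_div_pow (m + 1) hb]
  push_cast
  field_simp
  ring

/-- A concave function on `[0, a)` crosses an affine function with the same value at `0` at most
once, and from above to below. -/
lemma exists_crossing {a b : ℝ} (ha : 0 < a) {g : ℝ → ℝ} (hconc : ConcaveOn ℝ (Set.Ico 0 a) g) :
    ∃ c, 0 ≤ c ∧ c ≤ a ∧ (∀ x ∈ Set.Ico 0 a, x < c → g 0 * (1 - x / b) ≤ g x) ∧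
      ∀ x ∈ Set.Ico 0 a, c < x → g x ≤ g 0 * (1 - x / b) := by
  set S : Set ℝ := {x | x ∈ Set.Ico 0 a ∧ g 0 * (1 - x / b) ≤ g x} with hS
  have h0 : (0 : ℝ) ∈ S := ⟨⟨le_rfl, ha⟩, by simp⟩
  have hbd : BddAbove S := ⟨a, fun x hx => hx.1.2.le⟩
  refine ⟨sSup S, le_csSup hbd h0, csSup_le ⟨0, h0⟩ fun x hx => hx.1.2.le, ?_, ?_⟩
  · intro x hx hxc
    obtain ⟨y, hy, hxy⟩ := exists_lt_of_lt_csSup ⟨0, h0⟩ hxc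
    have hy0 : 0 < y := hx.1.trans_lt hxy
    have ht : x / y ≤ 1 := (div_le_one hy0).2 hxy.le
    have hc := hconc.2 h0.1 hy.1 (sub_nonneg.2 ht) (div_nonneg hx.1 hy0.le) (by ring)
    simp only [smul_eq_mul, mul_zero, zero_add, div_mul_cancel₀ x hy0.ne'] at hc
    have := mul_le_mul_of_nonneg_left hy.2 (div_nonneg hx.1 hy0.le)
    have e : (1 - x / y) * g 0 + x / y * (g 0 * (1 - y / b)) = g 0 * (1 - x / b) := by
      have : x / y * (y / b) = x / b := by field_simp
      linear_combination (-g 0) * this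
    linarith
  · intro x hx hxc
    by_contra! hlt
    exact absurd (le_csSup hbd ⟨hx, hlt.le⟩) (not_le.2 hxc)

lemma chord_le {a : ℝ} (ha : 0 < a) {g : ℝ → ℝ} (hconc : ConcaveOn ℝ (Set.Ico 0 a) g)
    (hnonneg : ∀ x ∈ Set.Ico (0 : ℝ) a, 0 ≤ g x) :
    ∀ x ∈ Set.Ico 0 a, g 0 * (1 - x / a) ≤ g x := by
  -- Nothing is known about `g a`, so the bound is the limit as `y` tends to `a` from below of the
  -- bounds given by concavity on `[0, y]`.
  intro x hx
  rcases hx.1.eq_or_lt with rfl | hx0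
  · simp
  have hlim : Filter.Tendsto (fun y : ℝ => g 0 * (1 - x / y)) (nhdsWithin a (Set.Iio a))
      (nhds (g 0 * (1 - x / a))) := by
    refine tendsto_nhdsWithin_of_tendsto_nhds ?_
    exact (((continuousAt_const.div continuousAt_id ha.ne').const_sub 1).const_mul _ :
      ContinuousAt (fun y : ℝ => g 0 * (1 - x / y)) a)
  have hev : ∀ᶠ y in nhdsWithin a (Set.Iio a), g 0 * (1 - x / y) ≤ g x := by
    filter_upwards [Ioo_mem_nhdsLT hx.2] with y hy
    have hy0 : 0 < y := hx0.trans hy.1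
    have ht : x / y ≤ 1 := (div_le_one hy0).2 hy.1.le
    have hc := hconc.2 ⟨le_rfl, ha⟩ ⟨hy0.le, hy.2⟩ (sub_nonneg.2 ht) (div_nonneg hx.1 hy0.le)
      (by ring)
    simp only [smul_eq_mul, mul_zero, zero_add, div_mul_cancel₀ x hy0.ne'] at hc
    have := mul_nonneg (div_nonneg hx.1 hy0.le) (hnonneg y ⟨hy0.le, hy.2⟩)
    linarith
  exact le_of_tendsto hlim hev

lemma intervalIntegrable_pow_of_concave {a : ℝ} (ha : 0 < a) {g : ℝ → ℝ} (m : ℕ)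
    (hconc : ConcaveOn ℝ (Set.Ico 0 a) g)
    (hbdd : ∃ M : ℝ, ∀ x ∈ Set.Ico (0 : ℝ) a, |g x| ≤ M) :
    IntervalIntegrable (fun x => g x ^ m) volume 0 a := by
  obtain ⟨M, hM⟩ := hbdd
  rw [intervalIntegrable_iff_integrableOn_Ioo_of_le ha.le]
  have hcont : ContinuousOn g (Set.Ioo 0 a) :=
    (hconc.subset Set.Ioo_subset_Ico_self (convex_Ioo 0 a)).continuousOn isOpen_Ioo
  refine IntegrableOn.of_bound (by simp)
    ((hcont.pow m).aestronglyMeasurable measurableSet_Ioo) (M ^ m) ?_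
  refine (ae_restrict_iff' measurableSet_Ioo).2 (Filter.Eventually.of_forall fun x hx => ?_)
  rw [norm_pow, Real.norm_eq_abs]
  exact pow_le_pow_left₀ (abs_nonneg _) (hM x ⟨hx.1.le, hx.2⟩) m

/-- Lemma 3.4 (inequality part): for `a > 0`, an integer `n ≥ 1`, and a
nonnegative bounded concave function `g` on `[0, a)` with `g 0 > 0`,
`g(0)^{n−1}·∫_0^a x·g(x)^{n−1} dx ≤ (n/(n+1))·(∫_0^a g(x)^{n−1} dx)²`. -/
theorem stmt_6 (a : ℝ) (ha : 0 < a) (n : ℕ) (hn : 1 ≤ n) (g : ℝ → ℝ)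
    (hconc : ConcaveOn ℝ (Set.Ico 0 a) g)
    (hnonneg : ∀ x ∈ Set.Ico (0 : ℝ) a, 0 ≤ g x)
    (hbdd : ∃ M : ℝ, ∀ x ∈ Set.Ico (0 : ℝ) a, |g x| ≤ M)
    (hg0 : 0 < g 0) :
    g 0 ^ (n - 1) * ∫ x in (0 : ℝ)..a, x * g x ^ (n - 1) ≤
      ((n : ℝ) / (n + 1)) * (∫ x in (0 : ℝ)..a, g x ^ (n - 1)) ^ 2 := by
  obtain ⟨m, rfl⟩ : ∃ m, n = m + 1 := ⟨n - 1, by omega⟩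
  simp only [Nat.add_sub_cancel]
  have hint := intervalIntegrable_pow_of_concave ha m hconc hbdd
  have hintx : IntervalIntegrable (fun x => x * g x ^ m) volume 0 a :=
    hint.continuousOn_mul continuousOn_id
  set I := ∫ x in (0 : ℝ)..a, g x ^ m with hI
  set J := ∫ x in (0 : ℝ)..a, x * g x ^ m with hJ
  have hG : 0 < g 0 ^ m := pow_pos hg0 m
  set G := g 0 ^ m with hGdef
  have hm : (0 : ℝ) < m + 1 := by positivity
  have hIa : G * (a / (m + 1)) ≤ I := by
    rw [← integral_one_sub_div_pow m ha, ← intervalIntegral.integral_const_mul]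
    refine integral_mono_on_of_le_Ioo ha.le (Continuous.intervalIntegrable (by fun_prop) _ _)
      hint fun x hx => ?_
    rw [hGdef, ← mul_pow]
    refine pow_le_pow_left₀ (mul_nonneg hg0.le (sub_nonneg.2 ((div_le_one ha).2 hx.2.le))) ?_ m
    exact chord_le ha hconc hnonneg x ⟨hx.1.le, hx.2⟩
  obtain ⟨b, hb⟩ : ∃ b, b = (m + 1) * I / G := ⟨_, rfl⟩
  have hab : a ≤ b := by
    rw [hb, le_div_iff₀ hG]
    calc a * G = (m + 1) * (G * (a / (m + 1))) := by field_simp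
      _ ≤ (m + 1) * I := by gcongr
  have hb0 : 0 < b := ha.trans_le hab
  obtain ⟨c, hc0, hca, hlo, hhi⟩ := exists_crossing (b := b) ha hconc
  have hcont : Continuous fun x : ℝ => (x - c) * (G * (1 - x / b) ^ m) := by fun_prop
  have hle1 : ∫ x in (0 : ℝ)..a, (x - c) * g x ^ m
      ≤ ∫ x in (0 : ℝ)..a, (x - c) * (G * (1 - x / b) ^ m) := by
    refine integral_mono_on_of_le_Ioo ha.le (hint.continuousOn_mul (by fun_prop))
      (hcont.intervalIntegrable _ _) fun x hx => ?_
    have hx' : x ∈ Set.Ico 0 a := ⟨hx.1.le, hx.2⟩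
    have hh : 0 ≤ g 0 * (1 - x / b) :=
      mul_nonneg hg0.le (sub_nonneg.2 ((div_le_one hb0).2 (hx.2.le.trans hab)))
    rw [hGdef, ← mul_pow]
    rcases lt_trichotomy x c with h | h | h
    · exact mul_le_mul_of_nonpos_left (pow_le_pow_left₀ hh (hlo x hx' h) m) (by linarith)
    · simp [h]
    · exact mul_le_mul_of_nonneg_left (pow_le_pow_left₀ (hnonneg x hx') (hhi x hx' h) m)
        (by linarith)
  have hle2 : 0 ≤ ∫ x in a..b, (x - c) * (G * (1 - x / b) ^ m) := by
    refine integral_nonneg hab fun x hx => ?_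
    have : 0 ≤ 1 - x / b := sub_nonneg.2 ((div_le_one hb0).2 hx.2)
    exact mul_nonneg (by linarith [hx.1]) (by positivity)
  have hadd := integral_add_adjacent_intervals (hcont.intervalIntegrable 0 a (μ := volume))
    (hcont.intervalIntegrable a b)
  have hleft : ∫ x in (0 : ℝ)..a, (x - c) * g x ^ m = J - c * I := by
    simp_rw [sub_mul]
    rw [intervalIntegral.integral_sub hintx (hint.const_mul c), intervalIntegral.integral_const_mul]
  have hright : ∫ x in (0 : ℝ)..b, (x - c) * (G * (1 - x / b) ^ m)
      = G * (b ^ 2 / ((m + 1) * (m + 2))) - c * (G * (b / (m + 1))) := by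
    rw [← integral_mul_one_sub_div_pow m hb0, ← integral_one_sub_div_pow m hb0,
      ← intervalIntegral.integral_const_mul, ← intervalIntegral.integral_const_mul,
      ← intervalIntegral.integral_const_mul,
      ← intervalIntegral.integral_sub (Continuous.intervalIntegrable (by fun_prop) _ _)
        (Continuous.intervalIntegrable (by fun_prop) _ _)]
    congr 1
    ext x
    ring
  have hmass : G * (b / (m + 1)) = I := by
    rw [hb]; field_simp
  have hfinal : J ≤ G * (b ^ 2 / ((m + 1) * (m + 2))) := by
    rw [hmass] at hright
    linarith
  calc G * J ≤ G * (G * (b ^ 2 / ((m + 1) * (m + 2)))) := by gcongr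
    _ = ((m + 1 : ℕ) : ℝ) / (((m + 1 : ℕ) : ℝ) + 1) * I ^ 2 := by
      rw [← hmass]
      push_cast
      field_simp
      ring
end

section
/- Let a > 0 be a real number, let n ≥ 1 be an integer, and let g : [0,a) → ℝ be a nonnegative bounded concave function with g(0) > 0. Then g(0)^{n−1}·∫_0^a x·g(x)^{n−1} dx = (n/(n+1))·(∫_0^a g(x)^{n−1} dx)² holds if and only if n = 1 or g(x) = (1 − x/a)·g(0) for all x ∈ [0,a). -/
open MeasureTheory intervalIntegral

/-!
Write `n = m + 1`, `I = ∫₀ᵃ g ^ m`, and let `h x = (1 - x / b) * g 0` be the affine function with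
`h 0 = g 0` whose zero `b` is chosen so that `∫₀ᵇ h ^ m = I`, i.e. `b = n * I / g 0 ^ m`.
Explicit integration (`integral_affine_pow`, `integral_mul_affine_pow`) turns the right-hand side
of the equality into `g 0 ^ m * ∫₀ᵇ x * h x ^ m`, so the claim compares the first moments
of `g ^ m` on `[0, a]` and of `h ^ m` on `[0, b]`, two densities of equal mass.

Concavity and nonnegativity give `g x ≥ (1 - x / a) * g 0` (`chord_to_end`), hence `a ≤ b`.

* If `a < b`, concavity of `g - h` makes `g` cross `h` at most once, from above to below, at some
  `c ≤ a`. Thus `(x - c) * (g x ^ m - h x ^ m) ≤ 0` on `(0, a)`, while the mass of `h ^ m` on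
  `(a, b)` lies to the right of `c`, so the first moment of `g ^ m` is strictly smaller
  (`moment_lt`) and equality fails.
* If `a = b`, then `g ≥ h` and `∫₀ᵃ g ^ m = ∫₀ᵃ h ^ m`. Were `g > h` at some point `y`, concavity
  would give `g > h` on all of `(0, y)`, contradicting the equality of the integrals (`m ≥ 1`).
-/

lemma integral_affine_pow (b : ℝ) (hb : 0 < b) (s : ℝ) (m : ℕ) :
    ∫ x in (0 : ℝ)..b, ((1 - x / b) * s) ^ m = s ^ m * b / (m + 1) := by
  have h := intervalIntegral.integral_comp_sub_div (a := 0) (b := b)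
    (fun y : ℝ => y ^ m) hb.ne' 1
  simp only [mul_pow, intervalIntegral.integral_mul_const]
  rw [h]
  simp [hb.ne', integral_pow]
  ring

lemma integral_mul_affine_pow (b : ℝ) (hb : 0 < b) (s : ℝ) (m : ℕ) :
    ∫ x in (0 : ℝ)..b, x * ((1 - x / b) * s) ^ m = s ^ m * b ^ 2 / ((m + 1) * (m + 2)) := by
  have h1 := integral_affine_pow b hb 1 m
  have h2 := integral_affine_pow b hb 1 (m + 1)
  simp only [mul_one, one_pow, one_mul] at h1 h2
  -- Writing `x = b * (1 - (1 - x / b))` reduces the first moment to two integrals of powers.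
  have h3 : ∀ x : ℝ, x * ((1 - x / b) * s) ^ m
      = (b * s ^ m) * ((1 - x / b) ^ m - (1 - x / b) ^ (m + 1)) := by
    intro x
    rw [mul_pow, pow_succ]
    field_simp
    ring
  simp only [h3, intervalIntegral.integral_const_mul]
  rw [intervalIntegral.integral_sub
    (Continuous.intervalIntegrable (by fun_prop) _ _)
    (Continuous.intervalIntegrable (by fun_prop) _ _), h1, h2]
  push_cast
  field_simp
  ring

/-- Powers of a bounded concave function on `[0, a)` are integrable, although nothing is known
about the value at `a`. -/
lemma integrable_pow {a : ℝ} (ha : 0 < a) {g : ℝ → ℝ}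
    (hconc : ConcaveOn ℝ (Set.Ico 0 a) g)
    (hbdd : ∃ M : ℝ, ∀ x ∈ Set.Ico (0 : ℝ) a, |g x| ≤ M) (m : ℕ) :
    IntervalIntegrable (fun x => g x ^ m) volume 0 a := by
  obtain ⟨M, hM⟩ := hbdd
  rw [intervalIntegrable_iff_integrableOn_Ioo_of_le ha.le]
  have hc : ContinuousOn g (Set.Ioo 0 a) := by
    have := hconc.continuousOn_interior
    rwa [interior_Ico] at this
  refine IntegrableOn.of_bound (by simp)
    ((hc.pow m).aestronglyMeasurable measurableSet_Ioo) (M ^ m) ?_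
  filter_upwards [ae_restrict_mem measurableSet_Ioo] with x hx
  rw [norm_pow, Real.norm_eq_abs]
  exact pow_le_pow_left₀ (abs_nonneg _) (hM x ⟨hx.1.le, hx.2⟩) m

lemma chord {a : ℝ} {g : ℝ → ℝ} (hconc : ConcaveOn ℝ (Set.Ico 0 a) g)
    {x y : ℝ} (hx : 0 ≤ x) (hxy : x ≤ y) (hy : 0 < y) (hya : y < a) :
    (y - x) * g 0 + x * g y ≤ y * g x := by
  have hle : 0 ≤ 1 - x / y := by
    rw [sub_nonneg, div_le_one hy]
    exact hxy
  have h0 : (0 : ℝ) ∈ Set.Ico 0 a := ⟨le_rfl, hy.trans hya⟩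
  have hyI : y ∈ Set.Ico 0 a := ⟨hy.le, hya⟩
  have h := hconc.2 h0 hyI hle (div_nonneg hx hy.le) (sub_add_cancel 1 (x / y))
  simp only [smul_eq_mul, mul_zero, zero_add] at h
  rw [div_mul_cancel₀ _ hy.ne'] at h
  calc (y - x) * g 0 + x * g y = y * ((1 - x / y) * g 0 + x / y * g y) := by field_simp
    _ ≤ y * g x := by gcongr

/-- The difference `u` between a concave function and an affine function with the same value at `0`
has nonincreasing slope `u x / x`, so it changes sign at most once, from positive to negative. -/
lemma chord_diff {a b : ℝ} (hb : 0 < b) {g : ℝ → ℝ} (hconc : ConcaveOn ℝ (Set.Ico 0 a) g)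
    {x y : ℝ} (hx : 0 ≤ x) (hxy : x ≤ y) (hy : 0 < y) (hya : y < a) :
    x * (g y - (1 - y / b) * g 0) ≤ y * (g x - (1 - x / b) * g 0) := by
  have h := chord hconc hx hxy hy hya
  have e : y * ((1 - x / b) * g 0) = (y - x) * g 0 + x * ((1 - y / b) * g 0) := by
    field_simp
    ring
  linarith

lemma chord_to_end {a : ℝ} {g : ℝ → ℝ} (hconc : ConcaveOn ℝ (Set.Ico 0 a) g)
    (hnonneg : ∀ x ∈ Set.Ico (0 : ℝ) a, 0 ≤ g x) {x : ℝ} (hx : x ∈ Set.Ico (0 : ℝ) a) :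
    (1 - x / a) * g 0 ≤ g x := by
  have ha : 0 < a := hx.1.trans_lt hx.2
  have key : ∀ y ∈ Set.Ioo x a, (y - x) * g 0 ≤ y * g x := by
    intro y hy
    have hy0 : 0 < y := hx.1.trans_lt hy.1
    have h := chord hconc hx.1 hy.1.le hy0 hy.2
    have := mul_nonneg hx.1 (hnonneg y ⟨hy0.le, hy.2⟩)
    linarith
  -- The bound for endpoints `y < a` passes to the limit `y = a`.
  have lim : (a - x) * g 0 ≤ a * g x := by
    have hcl : closure (Set.Ioo x a) = Set.Icc x a := closure_Ioo hx.2.ne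
    exact le_on_closure (f := fun y => (y - x) * g 0) (g := fun y => y * g x) key
      (by fun_prop) (by fun_prop) (by rw [hcl]; exact ⟨hx.2.le, le_rfl⟩)
  have : (1 - x / a) * g 0 = (a - x) * g 0 / a := by field_simp
  rw [this, div_le_iff₀ ha]
  linarith

/-- Among densities of equal mass, `g ^ m` on `[0, a]` has a strictly smaller first moment than the
power of the affine function `(1 - x / b) * g 0` on the longer interval `[0, b]`. -/
lemma moment_lt {a b : ℝ} (ha : 0 < a) (hab : a < b) {g : ℝ → ℝ}
    (hconc : ConcaveOn ℝ (Set.Ico 0 a) g)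
    (hnonneg : ∀ x ∈ Set.Ico (0 : ℝ) a, 0 ≤ g x)
    (hg0 : 0 < g 0) (m : ℕ)
    (hint : IntervalIntegrable (fun x => g x ^ m) volume 0 a)
    (hmass : ∫ x in (0 : ℝ)..a, g x ^ m = ∫ x in (0 : ℝ)..b, ((1 - x / b) * g 0) ^ m) :
    ∫ x in (0 : ℝ)..a, x * g x ^ m < ∫ x in (0 : ℝ)..b, x * ((1 - x / b) * g 0) ^ m := by
  have hb : 0 < b := ha.trans hab
  have hintx : IntervalIntegrable (fun x => x * g x ^ m) volume 0 a :=
    hint.continuousOn_mul continuousOn_id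
  have hh : ∀ u v : ℝ, IntervalIntegrable (fun x => ((1 - x / b) * g 0) ^ m) volume u v :=
    fun u v => Continuous.intervalIntegrable (by fun_prop) _ _
  have hhx : ∀ u v : ℝ, IntervalIntegrable (fun x => x * ((1 - x / b) * g 0) ^ m) volume u v :=
    fun u v => Continuous.intervalIntegrable (by fun_prop) _ _
  -- `c` is the supremum of the points where `g` is at least the affine function.
  set S : Set ℝ := {x | x ∈ Set.Ico (0 : ℝ) a ∧ (1 - x / b) * g 0 ≤ g x} with hS
  have hS0 : (0 : ℝ) ∈ S := ⟨⟨le_rfl, ha⟩, by simp⟩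
  have hSb : BddAbove S := ⟨a, fun x hx => hx.1.2.le⟩
  set c := sSup S with hc
  have hca : c ≤ a := csSup_le ⟨0, hS0⟩ fun x hx => hx.1.2.le
  have hsign : ∀ x ∈ Set.Ioo (0 : ℝ) a,
      x * g x ^ m - c * g x ^ m
        ≤ x * ((1 - x / b) * g 0) ^ m - c * ((1 - x / b) * g 0) ^ m := by
    intro x hx
    have hlin : 0 ≤ (1 - x / b) * g 0 := by
      have : x / b ≤ 1 := by rw [div_le_one hb]; linarith [hx.2]
      exact mul_nonneg (by linarith) hg0.le
    rw [← sub_mul, ← sub_mul]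
    rcases lt_or_ge x c with hxc | hxc
    · obtain ⟨y, hyS, hxy⟩ := exists_lt_of_lt_csSup ⟨0, hS0⟩ hxc
      have hy0 : 0 < y := hx.1.trans hxy
      have h := chord_diff hb hconc hx.1.le hxy.le hy0 hyS.1.2
      have h1 : 0 ≤ x * (g y - (1 - y / b) * g 0) :=
        mul_nonneg hx.1.le (sub_nonneg.2 hyS.2)
      have h2 := nonneg_of_mul_nonneg_right (h1.trans h) hy0
      exact mul_le_mul_of_nonpos_left
        (pow_le_pow_left₀ hlin (by linarith) m) (by linarith)
    · rcases hxc.eq_or_lt with hxc | hxc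
      · simp [hxc]
      · have hle : g x ≤ (1 - x / b) * g 0 := by
          by_contra hcon
          push Not at hcon
          have : x ≤ c := le_csSup hSb ⟨⟨hx.1.le, hx.2⟩, hcon.le⟩
          linarith
        exact mul_le_mul_of_nonneg_left
          (pow_le_pow_left₀ (hnonneg x ⟨hx.1.le, hx.2⟩) hle m) (by linarith)
  have h1 := integral_mono_on_of_le_Ioo ha.le (hintx.sub (hint.const_mul c))
    ((hhx 0 a).sub ((hh 0 a).const_mul c)) hsign
  have h2 : 0 < ∫ x in a..b,
      (x * ((1 - x / b) * g 0) ^ m - c * ((1 - x / b) * g 0) ^ m) := by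
    refine intervalIntegral_pos_of_pos_on ((hhx a b).sub ((hh a b).const_mul c)) ?_ hab
    intro x hx
    have : x / b < 1 := by rw [div_lt_one hb]; exact hx.2
    have hp : 0 < (1 - x / b) * g 0 := mul_pos (by linarith) hg0
    rw [← sub_mul]
    exact mul_pos (by linarith [hx.1]) (pow_pos hp m)
  rw [intervalIntegral.integral_sub hintx (hint.const_mul c),
    intervalIntegral.integral_sub (hhx 0 a) ((hh 0 a).const_mul c),
    intervalIntegral.integral_const_mul, intervalIntegral.integral_const_mul] at h1
  rw [intervalIntegral.integral_sub (hhx a b) ((hh a b).const_mul c),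
    intervalIntegral.integral_const_mul] at h2
  rw [← integral_add_adjacent_intervals (hh 0 a) (hh a b)] at hmass
  rw [← integral_add_adjacent_intervals (hhx 0 a) (hhx a b)]
  rw [hmass] at h1
  linarith

/-- A concave function whose `m`-th power has the same integral as that of the chord
`(1 - x / a) * g 0` below it coincides with that chord. -/
lemma eq_chord_of_integral_eq {a : ℝ} (ha : 0 < a) {g : ℝ → ℝ}
    (hconc : ConcaveOn ℝ (Set.Ico 0 a) g)
    (hnonneg : ∀ x ∈ Set.Ico (0 : ℝ) a, 0 ≤ g x)
    (hg0 : 0 < g 0) {m : ℕ} (hm : m ≠ 0)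
    (hint : IntervalIntegrable (fun x => g x ^ m) volume 0 a)
    (hmass : ∫ x in (0 : ℝ)..a, g x ^ m = ∫ x in (0 : ℝ)..a, ((1 - x / a) * g 0) ^ m) :
    ∀ x ∈ Set.Ico (0 : ℝ) a, g x = (1 - x / a) * g 0 := by
  intro y hy
  refine le_antisymm ?_ (chord_to_end hconc hnonneg hy)
  by_contra hcon
  push Not at hcon
  have hy0 : 0 < y := by
    rcases hy.1.eq_or_lt with h | h
    · rw [← h] at hcon
      simp at hcon
    · exact h
  have hh : ∀ u v : ℝ, IntervalIntegrable (fun x => ((1 - x / a) * g 0) ^ m) volume u v :=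
    fun u v => Continuous.intervalIntegrable (by fun_prop) _ _
  have hlin : ∀ x < a, 0 ≤ (1 - x / a) * g 0 := by
    intro x hx
    have : x / a < 1 := by rw [div_lt_one ha]; exact hx
    exact mul_nonneg (by linarith) hg0.le
  have hi1 : IntervalIntegrable (fun x => g x ^ m) volume 0 y :=
    hint.mono_set (by
      rw [Set.uIcc_of_le hy0.le, Set.uIcc_of_le ha.le]; exact Set.Icc_subset_Icc le_rfl hy.2.le)
  have hi2 : IntervalIntegrable (fun x => g x ^ m) volume y a :=
    hint.mono_set (by
      rw [Set.uIcc_of_le hy.2.le, Set.uIcc_of_le ha.le]; exact Set.Icc_subset_Icc hy0.le le_rfl)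
  have h1 : 0 < ∫ x in (0 : ℝ)..y, (g x ^ m - ((1 - x / a) * g 0) ^ m) := by
    refine intervalIntegral_pos_of_pos_on (hi1.sub (hh 0 y)) ?_ hy0
    intro x hx
    have h := chord_diff ha hconc hx.1.le hx.2.le hy0 hy.2
    have h1 : 0 < x * (g y - (1 - y / a) * g 0) := mul_pos hx.1 (sub_pos.2 hcon)
    have h2 := pos_of_mul_pos_right (h1.trans_le h) hy0.le
    exact sub_pos.2 (pow_lt_pow_left₀ (by linarith) (hlin x (hx.2.trans hy.2)) hm)
  have h2 : ∫ x in y..a, ((1 - x / a) * g 0) ^ m ≤ ∫ x in y..a, g x ^ m := by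
    refine integral_mono_on_of_le_Ioo hy.2.le (hh y a) hi2 fun x hx => ?_
    exact pow_le_pow_left₀ (hlin x hx.2)
      (chord_to_end hconc hnonneg ⟨hy0.le.trans hx.1.le, hx.2⟩) m
  rw [intervalIntegral.integral_sub hi1 (hh 0 y)] at h1
  rw [← integral_add_adjacent_intervals hi1 hi2,
    ← integral_add_adjacent_intervals (hh 0 y) (hh y a)] at hmass
  linarith

/-- Lemma 3.4 (equality characterization): equality in
`g(0)^{n−1}·∫_0^a x·g(x)^{n−1} dx ≤ (n/(n+1))·(∫_0^a g(x)^{n−1} dx)²` holds iff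
`n = 1` or `g x = (1 − x/a)·g 0` for all `x ∈ [0, a)`. -/
theorem stmt_7 (a : ℝ) (ha : 0 < a) (n : ℕ) (hn : 1 ≤ n) (g : ℝ → ℝ)
    (hconc : ConcaveOn ℝ (Set.Ico 0 a) g)
    (hnonneg : ∀ x ∈ Set.Ico (0 : ℝ) a, 0 ≤ g x)
    (hbdd : ∃ M : ℝ, ∀ x ∈ Set.Ico (0 : ℝ) a, |g x| ≤ M)
    (hg0 : 0 < g 0) :
    g 0 ^ (n - 1) * ∫ x in (0 : ℝ)..a, x * g x ^ (n - 1) =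
        ((n : ℝ) / (n + 1)) * (∫ x in (0 : ℝ)..a, g x ^ (n - 1)) ^ 2 ↔
      n = 1 ∨ ∀ x ∈ Set.Ico (0 : ℝ) a, g x = (1 - x / a) * g 0 := by
  obtain ⟨m, rfl⟩ : ∃ m, n = m + 1 := ⟨n - 1, by omega⟩
  simp only [Nat.add_sub_cancel]
  push_cast
  have hpos : 0 < g 0 ^ m := pow_pos hg0 m
  have hint := integrable_pow ha hconc hbdd m
  constructor
  · intro heq
    by_cases hm : m = 0
    · left
      omega
    right
    set I := ∫ x in (0 : ℝ)..a, g x ^ m with hI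
    set b := (m + 1) * I / g 0 ^ m with hb
    have hIb : I = g 0 ^ m * b / (m + 1) := by
      rw [hb]
      field_simp
    have hlow : g 0 ^ m * a / (m + 1) ≤ I := by
      rw [← integral_affine_pow a ha (g 0) m]
      refine integral_mono_on_of_le_Ioo ha.le
        (Continuous.intervalIntegrable (by fun_prop) _ _) hint fun x hx => ?_
      have : x / a < 1 := by rw [div_lt_one ha]; exact hx.2
      exact pow_le_pow_left₀ (mul_nonneg (by linarith) hg0.le)
        (chord_to_end hconc hnonneg ⟨hx.1.le, hx.2⟩) m
    have hab : a ≤ b := by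
      rw [hb, le_div_iff₀ hpos]
      rw [div_le_iff₀ (by positivity)] at hlow
      linarith
    rcases hab.eq_or_lt with hab | hab
    · rw [← hab, ← integral_affine_pow a ha] at hIb
      exact eq_chord_of_integral_eq ha hconc hnonneg hg0 hm hint hIb
    · exfalso
      have hb0 : 0 < b := ha.trans hab
      have hlt := moment_lt ha hab hconc hnonneg hg0 m hint
        (by rw [integral_affine_pow b hb0]; exact hIb)
      rw [integral_mul_affine_pow b hb0] at hlt
      have hlt' := mul_lt_mul_of_pos_left hlt hpos
      rw [heq, hIb] at hlt'
      refine hlt'.ne ?_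
      field_simp
      ring
  · rintro (h | h)
    · obtain rfl : m = 0 := by omega
      simp
      ring
    · have e1 : ∫ x in (0 : ℝ)..a, g x ^ m = ∫ x in (0 : ℝ)..a, ((1 - x / a) * g 0) ^ m :=
        integral_congr_Ioo_of_le ha.le fun x hx => by
          simp only [h x ⟨hx.1.le, hx.2⟩]
      have e2 : ∫ x in (0 : ℝ)..a, x * g x ^ m
          = ∫ x in (0 : ℝ)..a, x * ((1 - x / a) * g 0) ^ m :=
        integral_congr_Ioo_of_le ha.le fun x hx => by
          simp only [h x ⟨hx.1.le, hx.2⟩]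
      rw [e1, e2, integral_affine_pow a ha, integral_mul_affine_pow a ha]
      field_simp
      ring
end
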